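/- Let (φ_n)_{n∈ℕ} be an orthonormal family in L²(I,ω_α) that is total (i.e., any f ∈ L²(I,ω_α) with ⟨f,φ_n⟩ = 0 for all n vanishes almost everywhere), such that each φ_n is continuous on [-1,1] and there are positive real numbers ν_n with (L_c^α φ_n)(x) = ν_n φ_n(x) for every x ∈ I. Then the series ∑_{n=0}^{∞} ν_n converges and ∑_{n=0}^{∞} ν_n = ∫_{-1}^{1} e^{c x²} (1-x²)^α dx. -/

import Mathlib

/-!
The kernel factors through its exponential series: `e^{cxy} = ∑ₖ (cᵏ / k!) xᵏ yᵏ`. Writing `μ` for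
the measure `ω_α(x) dx` on `[-1, 1]` and `a(k, n) = ∫ yᵏ φₙ dμ`, the eigenvalue equation gives
`νₙ = ∫ φₙ (L φₙ) dμ = ∑ₖ (cᵏ / k!) a(k, n)²` (`hasSum_quadratic_form`). For fixed `k`, Parseval's
identity for the Hilbert basis `(φₙ)` gives `∑ₙ a(k, n)² = ∫ y²ᵏ dμ` (`hasSum_parseval`). All terms
`(cᵏ / k!) a(k, n)²` are nonnegative, so the two summations may be exchanged, and
`∑ₙ νₙ = ∑ₖ (cᵏ / k!) ∫ y²ᵏ dμ = ∫ e^{cy²} dμ`. No uniform convergence of the Mercer expansion is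
needed.
-/

open MeasureTheory

/-- The weight function `ω_α(x) = (1 - x²)^α`. -/
noncomputable def w (α x : ℝ) : ℝ := (1 - x ^ 2) ^ α

/-- The weighted finite Laplace transform `(L_c^α f)(x) = ∫_{-1}^1 e^{cxy} f(y) ω_α(y) dy`. -/
noncomputable def Lap (c α : ℝ) (f : ℝ → ℝ) (x : ℝ) : ℝ :=
  ∫ y in (-1:ℝ)..1, Real.exp (c * x * y) * f y * w α y

/-- Membership in `L²(I, ω_α)`. -/
def MemL2 (α : ℝ) (f : ℝ → ℝ) : Prop :=
  Measurable f ∧ IntervalIntegrable (fun x => f x ^ 2 * w α x) volume (-1) 1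

/-! ### The weighted measure -/

/-- The measure `ω_α(x) dx` on `[-1, 1]`. The half-open interval matches the convention of interval
integrals; the endpoints carry no mass. -/
noncomputable def muW (α : ℝ) : Measure ℝ :=
  (volume.restrict (Set.Ioc (-1 : ℝ) 1)).withDensity fun x => ENNReal.ofReal (w α x)

lemma measurable_w (α : ℝ) : Measurable (w α) := by
  unfold w
  fun_prop

lemma w_nonneg {α x : ℝ} (hx : x ∈ Set.Icc (-1 : ℝ) 1) : 0 ≤ w α x := by
  apply Real.rpow_nonneg
  nlinarith [hx.1, hx.2]

lemma ae_mem_Icc : ∀ᵐ x ∂(volume.restrict (Set.Ioc (-1 : ℝ) 1)), x ∈ Set.Icc (-1 : ℝ) 1 := by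
  filter_upwards [ae_restrict_mem measurableSet_Ioc] with x hx
  exact Set.Ioc_subset_Icc_self hx

lemma ae_muW_mem_Icc (α : ℝ) : ∀ᵐ x ∂(muW α), x ∈ Set.Icc (-1 : ℝ) 1 :=
  (withDensity_absolutelyContinuous _ _).ae_le ae_mem_Icc

lemma integral_muW (α : ℝ) (f : ℝ → ℝ) :
    ∫ x, f x ∂(muW α) = ∫ x in (-1 : ℝ)..1, f x * w α x := by
  rw [muW, integral_withDensity_eq_integral_toReal_smul (measurable_w α).ennreal_ofReal
    (by simp), intervalIntegral.integral_of_le (by norm_num)]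
  apply integral_congr_ae
  filter_upwards [ae_mem_Icc] with x hx
  rw [ENNReal.toReal_ofReal (w_nonneg hx), smul_eq_mul, mul_comm]

lemma intervalIntegrable_of_integrable_muW {α : ℝ} {f : ℝ → ℝ} (hf : Integrable f (muW α)) :
    IntervalIntegrable (fun x => f x * w α x) volume (-1) 1 := by
  rw [muW, integrable_withDensity_iff_integrable_smul' (measurable_w α).ennreal_ofReal
    (by simp)] at hf
  rw [intervalIntegrable_iff_integrableOn_Ioc_of_le (by norm_num)]
  refine hf.congr ?_
  filter_upwards [ae_mem_Icc] with x hx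
  rw [ENNReal.toReal_ofReal (w_nonneg hx), smul_eq_mul, mul_comm]

/-- On `[0, 1]` the factor `(1 + x)^α` is continuous and `(1 - x)^α` is integrable since `α > -1`;
the other half follows by the symmetry `x ↦ -x`. -/
lemma intervalIntegrable_w {α : ℝ} (hα : -1 < α) : IntervalIntegrable (w α) volume (-1) 1 := by
  have h1 : IntervalIntegrable (w α) volume 0 1 := by
    have h := ((intervalIntegral.intervalIntegrable_rpow' (a := 1) (b := 0) hα).comp_sub_left 1)
    simp only [sub_self, sub_zero] at h
    have hc : ContinuousOn (fun x : ℝ => (1 + x) ^ α) (Set.uIcc 0 1) := by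
      intro x hx
      rw [Set.uIcc_of_le zero_le_one] at hx
      refine ContinuousAt.continuousWithinAt (ContinuousAt.rpow_const (by fun_prop) (Or.inl ?_))
      linarith [hx.1]
    refine (h.mul_continuousOn hc).congr ?_
    intro x hx
    rw [Set.uIoc_of_le zero_le_one] at hx
    simp only [w]
    rw [← Real.mul_rpow (by linarith [hx.2]) (by linarith [hx.1])]
    congr 1
    ring
  have h2 : IntervalIntegrable (w α) volume (-1) 0 := by
    have h := (h1.comp_sub_left 0).symm
    simp only [sub_zero, zero_sub] at h
    refine h.congr ?_
    intro x _
    simp [w]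
  exact h2.trans h1

lemma isFiniteMeasure_muW {α : ℝ} (hα : -1 < α) : IsFiniteMeasure (muW α) :=
  isFiniteMeasure_withDensity_ofReal
    ((intervalIntegrable_iff_integrableOn_Ioc_of_le (by norm_num)).1
      (intervalIntegrable_w hα)).hasFiniteIntegral

/-! ### The quadratic form of the kernel -/

lemma hasSum_integral_of_bound {μ : Measure ℝ} [IsFiniteMeasure μ] {F : ℕ → ℝ → ℝ} {f : ℝ → ℝ}
    {b : ℕ → ℝ} (hF : ∀ k, Measurable (F k)) (hb : ∀ k, ∀ᵐ x ∂μ, |F k x| ≤ b k)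
    (hs : Summable b) (h : ∀ᵐ x ∂μ, HasSum (fun k => F k x) (f x)) :
    HasSum (fun k => ∫ x, F k x ∂μ) (∫ x, f x ∂μ) :=
  hasSum_integral_of_dominated_convergence (fun k _ => b k)
    (fun k => (hF k).aestronglyMeasurable) hb (Filter.Eventually.of_forall fun _ => hs)
    (integrable_const _) h

lemma hasSum_congr_left {u v : ℕ → ℝ} {a : ℝ} (h : ∀ k, u k = v k) : HasSum u a ↔ HasSum v a := by
  rw [funext h]

lemma hasSum_exp_real (x : ℝ) : HasSum (fun k : ℕ => x ^ k / k.factorial) (Real.exp x) := by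
  rw [Real.exp_eq_exp_ℝ]
  exact NormedSpace.expSeries_div_hasSum_exp x

lemma abs_pow_le_one {x : ℝ} (hx : x ∈ Set.Icc (-1 : ℝ) 1) (k : ℕ) : |x ^ k| ≤ 1 := by
  rw [abs_pow]
  exact pow_le_one₀ (abs_nonneg x) (abs_le.2 hx)

/-- The quadratic form of the Laplace kernel, diagonalised by the exponential series. -/
lemma hasSum_quadratic_form {c α : ℝ} (hc : 0 < c) (hα : -1 < α) {f : ℝ → ℝ} (hf : Measurable f)
    {M : ℝ} (hM : ∀ x ∈ Set.Icc (-1 : ℝ) 1, |f x| ≤ M) :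
    HasSum (fun k : ℕ => c ^ k / k.factorial * (∫ y, y ^ k * f y ∂(muW α)) ^ 2)
      (∫ x, f x * (∫ y, Real.exp (c * x * y) * f y ∂(muW α)) ∂(muW α)) := by
  have := isFiniteMeasure_muW hα
  have hM0 : 0 ≤ M := (abs_nonneg _).trans (hM 0 (by simp))
  have hbd : ∀ x ∈ Set.Icc (-1 : ℝ) 1, ∀ k : ℕ, |x ^ k * f x| ≤ M := by
    intro x hx k
    rw [abs_mul]
    calc |x ^ k| * |f x| ≤ 1 * M :=
          mul_le_mul (abs_pow_le_one hx k) (hM x hx) (abs_nonneg _) zero_le_one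
      _ = M := one_mul M
  have hcoef : ∀ k : ℕ, |c ^ k / k.factorial| = c ^ k / k.factorial := fun k =>
    abs_of_nonneg (by positivity)
  have inner : ∀ x ∈ Set.Icc (-1 : ℝ) 1,
      HasSum (fun k : ℕ => c ^ k / k.factorial * x ^ k * ∫ y, y ^ k * f y ∂(muW α))
        (∫ y, Real.exp (c * x * y) * f y ∂(muW α)) := by
    intro x hx
    have h := hasSum_integral_of_bound (μ := muW α)
      (F := fun k y => c ^ k / k.factorial * x ^ k * (y ^ k * f y))
      (f := fun y => Real.exp (c * x * y) * f y)
      (b := fun k => c ^ k / k.factorial * M) (fun k => by fun_prop) ?_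
      ((hasSum_exp_real c).summable.mul_right M) ?_
    · simpa only [integral_const_mul] using h
    · intro k
      filter_upwards [ae_muW_mem_Icc α] with y hy
      rw [abs_mul, abs_mul, hcoef, mul_assoc]
      refine mul_le_mul_of_nonneg_left ?_ (by positivity)
      calc |x ^ k| * |y ^ k * f y| ≤ 1 * M :=
            mul_le_mul (abs_pow_le_one hx k) (hbd y hy k) (abs_nonneg _) zero_le_one
        _ = M := one_mul M
    · refine Filter.Eventually.of_forall fun y => ?_
      have h := (hasSum_exp_real (c * x * y)).mul_right (f y)
      refine (hasSum_congr_left ?_).1 h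
      intro k
      rw [mul_pow, mul_pow]
      ring
  set a : ℕ → ℝ := fun k => ∫ y, y ^ k * f y ∂(muW α) with ha
  set V : ℝ := M * (muW α).real Set.univ with hV
  have haV : ∀ k, |a k| ≤ V := by
    intro k
    have := norm_integral_le_of_norm_le_const (μ := muW α) (f := fun y => y ^ k * f y) (C := M)
      (by filter_upwards [ae_muW_mem_Icc α] with y hy using hbd y hy k)
    simpa using this
  have h := hasSum_integral_of_bound (μ := muW α)
    (F := fun k x => c ^ k / k.factorial * a k * (x ^ k * f x))
    (f := fun x => f x * (∫ y, Real.exp (c * x * y) * f y ∂(muW α)))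
    (b := fun k => c ^ k / k.factorial * (V * M)) (fun k => by fun_prop) ?_
    ((hasSum_exp_real c).summable.mul_right (V * M)) ?_
  · simp only [integral_const_mul] at h
    refine (hasSum_congr_left ?_).1 h
    intro k
    simp only [ha]
    ring
  · intro k
    filter_upwards [ae_muW_mem_Icc α] with x hx
    rw [abs_mul, abs_mul, hcoef, mul_assoc]
    refine mul_le_mul_of_nonneg_left ?_ (by positivity)
    exact mul_le_mul (haV k) (hbd x hx k) (abs_nonneg _) ((abs_nonneg _).trans (haV k))
  · filter_upwards [ae_muW_mem_Icc α] with x hx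
    refine (hasSum_congr_left ?_).1 ((inner x hx).mul_left (f x))
    intro k
    ring

/-! ### Parseval's identity and exchange of sums -/

/-- Parseval's identity for a total orthonormal family, stated with functions rather than classes. -/
lemma hasSum_parseval {α : ℝ} {φ : ℕ → ℝ → ℝ} (hφ : ∀ n, MemLp (φ n) 2 (muW α))
    (horth : ∀ m n, ∫ x, φ m x * φ n x ∂(muW α) = if m = n then 1 else 0)
    (htotal : ∀ f : ℝ → ℝ, Measurable f → MemLp f 2 (muW α) →
      (∀ n, ∫ x, f x * φ n x ∂(muW α) = 0) → f =ᵐ[muW α] 0)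
    {g : ℝ → ℝ} (hg : MemLp g 2 (muW α)) :
    HasSum (fun n => (∫ x, g x * φ n x ∂(muW α)) ^ 2) (∫ x, g x ^ 2 ∂(muW α)) := by
  have hin : ∀ {f h : ℝ → ℝ} (hf : MemLp f 2 (muW α)) (hh : MemLp h 2 (muW α)),
      inner ℝ (hf.toLp f) (hh.toLp h) = ∫ x, f x * h x ∂(muW α) := by
    intro f h hf hh
    rw [L2.inner_def]
    apply integral_congr_ae
    filter_upwards [hf.coeFn_toLp, hh.coeFn_toLp] with x h1 h2
    rw [h1, h2]
    simp [mul_comm]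
  have hon : Orthonormal ℝ fun n => (hφ n).toLp (φ n) := by
    rw [orthonormal_iff_ite]
    intro m n
    rw [hin, horth]
  have hbot : (Submodule.span ℝ (Set.range fun n => (hφ n).toLp (φ n)))ᗮ = ⊥ := by
    rw [Submodule.eq_bot_iff]
    intro v hv
    -- A Borel representative of the class `v`, as totality is a statement about measurable functions.
    have hvm : AEMeasurable v (muW α) := (Lp.aestronglyMeasurable v).aemeasurable
    have hu : MemLp (hvm.mk v) 2 (muW α) := (memLp_congr_ae hvm.ae_eq_mk).1 (Lp.memLp v)
    have hv_eq : v = hu.toLp (hvm.mk v) := by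
      apply Lp.ext
      exact hvm.ae_eq_mk.trans hu.coeFn_toLp.symm
    have h0 := htotal (hvm.mk v) hvm.measurable_mk hu (by
      intro n
      rw [← hin hu (hφ n), ← hv_eq, real_inner_comm]
      exact (Submodule.mem_orthogonal _ _).1 hv _ (Submodule.subset_span ⟨n, rfl⟩))
    apply Lp.ext
    exact (hvm.ae_eq_mk.trans h0).trans (Lp.coeFn_zero _ _ _).symm
  have h := (HilbertBasis.mkOfOrthogonalEqBot hon hbot).hasSum_inner_mul_inner
    (hg.toLp g) (hg.toLp g)
  rw [HilbertBasis.coe_mkOfOrthogonalEqBot] at h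
  simp only [real_inner_comm (hg.toLp g)] at h
  simpa only [hin, ← pow_two, mul_comm (φ _ _)] using h

/-- Exchange of summation for nonnegative families with summable row sums. -/
lemma hasSum_swap {t : ℕ → ℕ → ℝ} (ht : ∀ k n, 0 ≤ t k n) {r s : ℕ → ℝ} {T : ℝ}
    (hr : ∀ k, HasSum (fun n => t k n) (r k)) (hs : ∀ n, HasSum (fun k => t k n) (s n))
    (hT : HasSum r T) : HasSum s T := by
  have hsum : Summable fun p : ℕ × ℕ => t p.1 p.2 := by
    rw [summable_prod_of_nonneg fun p => ht p.1 p.2]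
    refine ⟨fun k => (hr k).summable, ?_⟩
    simpa only [(hr _).tsum_eq] using hT.summable
  have h1 := hsum.hasSum
  rw [(h1.prod_fiberwise hr).unique hT] at h1
  exact ((Equiv.prodComm ℕ ℕ).hasSum_iff.2 h1).prod_fiberwise hs

/-! ### The trace formula -/

/-- the trace formula `∑ ν_n = ∫_{-1}^1 e^{cx²} (1-x²)^α dx`. -/
theorem stmt7 (c α : ℝ) (hc : 0 < c) (hα : -1 < α)
    (φ : ℕ → ℝ → ℝ) (ν : ℕ → ℝ)
    (hmeas : ∀ n, Measurable (φ n))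
    (horth : ∀ m n, ∫ x in (-1:ℝ)..1, φ m x * φ n x * w α x =
      if m = n then 1 else 0)
    (htotal : ∀ f : ℝ → ℝ, MemL2 α f →
      (∀ n, ∫ x in (-1:ℝ)..1, f x * φ n x * w α x = 0) →
      (∀ᵐ x ∂(volume.restrict (Set.Icc (-1:ℝ) 1)), f x = 0))
    (hcont : ∀ n, ContinuousOn (φ n) (Set.Icc (-1:ℝ) 1))
    (hν : ∀ n, 0 < ν n)
    (heig : ∀ n, ∀ x ∈ Set.Icc (-1:ℝ) 1, Lap c α (φ n) x = ν n * φ n x) :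
    Summable ν ∧
      ∑' n, ν n = ∫ x in (-1:ℝ)..1, Real.exp (c * x ^ 2) * (1 - x ^ 2) ^ α := by
  have := isFiniteMeasure_muW hα
  have hbound : ∀ n, ∃ M, ∀ x ∈ Set.Icc (-1 : ℝ) 1, |φ n x| ≤ M := fun n =>
    isCompact_Icc.exists_bound_of_continuousOn (hcont n)
  have hφ : ∀ n, MemLp (φ n) 2 (muW α) := by
    intro n
    obtain ⟨M, hM⟩ := hbound n
    refine MemLp.of_bound (hmeas n).aestronglyMeasurable M ?_
    filter_upwards [ae_muW_mem_Icc α] with x hx using hM x hx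
  have horth' : ∀ m n, ∫ x, φ m x * φ n x ∂(muW α) = if m = n then 1 else 0 := by
    intro m n
    rw [integral_muW, horth]
  have htotal' : ∀ f : ℝ → ℝ, Measurable f → MemLp f 2 (muW α) →
      (∀ n, ∫ x, f x * φ n x ∂(muW α) = 0) → f =ᵐ[muW α] 0 := by
    intro f hfm hf h
    have h0 := htotal f ⟨hfm, intervalIntegrable_of_integrable_muW hf.integrable_sq⟩
      fun n => by rw [← integral_muW, h n]
    exact (withDensity_absolutelyContinuous _ _).ae_le
      (ae_restrict_of_ae_restrict_of_subset Set.Ioc_subset_Icc_self h0)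
  have hcol : ∀ n, HasSum
      (fun k : ℕ => c ^ k / k.factorial * (∫ y, y ^ k * φ n y ∂(muW α)) ^ 2) (ν n) := by
    intro n
    obtain ⟨M, hM⟩ := hbound n
    have h := hasSum_quadratic_form hc hα (hmeas n) hM
    have hval : ∫ x, φ n x * (∫ y, Real.exp (c * x * y) * φ n y ∂(muW α)) ∂(muW α) = ν n := by
      calc _ = ∫ x, ν n * (φ n x * φ n x) ∂(muW α) := by
            apply integral_congr_ae
            filter_upwards [ae_muW_mem_Icc α] with x hx
            have he := heig n x hx
            rw [Lap, ← integral_muW] at he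
            rw [he]
            ring
        _ = ν n := by rw [integral_const_mul, horth']; simp
    rwa [hval] at h
  have hrow : ∀ k : ℕ, HasSum
      (fun n => c ^ k / k.factorial * (∫ y, y ^ k * φ n y ∂(muW α)) ^ 2)
      (c ^ k / k.factorial * ∫ y, (y ^ k) ^ 2 ∂(muW α)) := by
    intro k
    refine (hasSum_parseval hφ horth' htotal' (g := fun y => y ^ k) ?_).mul_left _
    refine MemLp.of_bound (by fun_prop) 1 ?_
    filter_upwards [ae_muW_mem_Icc α] with x hx using abs_pow_le_one hx k
  have htrace : HasSum (fun k : ℕ => c ^ k / k.factorial * ∫ y, (y ^ k) ^ 2 ∂(muW α))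
      (∫ x, Real.exp (c * x ^ 2) ∂(muW α)) := by
    have h := hasSum_integral_of_bound (μ := muW α)
      (F := fun (k : ℕ) y => c ^ k / k.factorial * (y ^ k) ^ 2)
      (f := fun y => Real.exp (c * y ^ 2))
      (b := fun k => c ^ k / k.factorial) (fun k => by fun_prop) ?_
      (hasSum_exp_real c).summable ?_
    · simpa only [integral_const_mul] using h
    · intro k
      filter_upwards [ae_muW_mem_Icc α] with y hy
      rw [abs_mul, abs_of_nonneg (by positivity : 0 ≤ c ^ k / (k.factorial : ℝ)), ← pow_mul]
      exact mul_le_of_le_one_right (by positivity) (abs_pow_le_one hy _)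
    · refine Filter.Eventually.of_forall fun y => ?_
      refine (hasSum_congr_left ?_).1 (hasSum_exp_real (c * y ^ 2))
      intro k
      rw [mul_pow]
      ring
  have hfin := hasSum_swap (fun k n => by positivity) hrow hcol htrace
  rw [integral_muW] at hfin
  exact ⟨hfin.summable, hfin.tsum_eq⟩
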